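/- Let m > 2 be even and λ = (m−2)/2. For x, y ∈ ℝ^m∖{0} set s = ⟨x,y⟩ and t = |x∧y| = √(|x|²|y|² − s²). Then the Clifford–Fourier kernel (defined by the Gegenbauer–Bessel series) satisfies K_−(x,y) = (−1)^{m/2} (π/2)^{1/2} ( A*_{(m−2)/2}(s,t) + B*_{(m−2)/2}(s,t) + (x∧y) C*_{(m−2)/2}(s,t) ), where, with J̃_α(t) = t^{−α} J_α(t): A*_{(m−2)/2}(s,t) = Σ_{ℓ=0}^{⌊m/4 − 3/4⌋} s^{m/2−2−2ℓ} (1/(2^ℓ ℓ!)) (Γ(m/2)/Γ(m/2−2ℓ−1)) J̃_{(m−2ℓ−3)/2}(t); B*_{(m−2)/2}(s,t) = −Σ_{ℓ=0}^{⌊m/4 − 1/2⌋} s^{m/2−1−2ℓ} (1/(2^ℓ ℓ!)) (Γ(m/2)/Γ(m/2−2ℓ)) J̃_{(m−2ℓ−3)/2}(t); C*_{(m−2)/2}(s,t) = −Σ_{ℓ=0}^{⌊m/4 − 1/2⌋} s^{m/2−1−2ℓ} (1/(2^ℓ ℓ!)) (Γ(m/2)/Γ(m/2−2ℓ)) J̃_{(m−2ℓ−1)/2}(t).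 -/

import Mathlib

open scoped BigOperators
open MeasureTheory

noncomputable section

namespace CliffordFourier

/-- Concrete model of the complexified Clifford algebra `Cl_{0,m} ⊗ ℂ`:
an element is the family of its complex coefficients on the canonical basis
`e_S = e_{i₁} ⋯ e_{i_k}` (for `S = {i₁ < … < i_k} ⊆ {0,…,m-1}`). -/
def Cl (m : ℕ) : Type := Finset (Fin m) → ℂ

variable {m : ℕ}

instance : NormedAddCommGroup (Cl m) :=
  inferInstanceAs (NormedAddCommGroup (Finset (Fin m) → ℂ))
instance : NormedSpace ℝ (Cl m) :=
  inferInstanceAs (NormedSpace ℝ (Finset (Fin m) → ℂ))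
instance : Module ℂ (Cl m) := inferInstanceAs (Module ℂ (Finset (Fin m) → ℂ))
instance : CompleteSpace (Cl m) := inferInstanceAs (CompleteSpace (Finset (Fin m) → ℂ))

/-- The coefficient of `a` on the basis element `e_S`. -/
def coeff (a : Cl m) : Finset (Fin m) → ℂ := a

/-- Build an element of the Clifford algebra from its coefficients. -/
def ofCoeff (f : Finset (Fin m) → ℂ) : Cl m := f

/-- `1 = e_∅`. -/
instance : One (Cl m) := ⟨ofCoeff fun S => if S = (∅ : Finset (Fin m)) then 1 else 0⟩

/-- Clifford multiplication, determined by the relations `e_i e_j = - e_j e_i` (`i ≠ j`)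
and `e_i² = -1`; on basis elements it is given by
`e_T · e_U = (-1)^{#{(t,u) ∈ T×U : u < t}} · (-1)^{#(T∩U)} · e_{T Δ U}`. -/
instance : Mul (Cl m) :=
  ⟨fun a b => ofCoeff fun S => ∑ T : Finset (Fin m),
    ((-1 : ℂ) ^ ((((T ×ˢ (symmDiff T S)).filter fun p : Fin m × Fin m => p.2 < p.1).card)
        + (T ∩ (symmDiff T S)).card))
      * coeff a T * coeff b (symmDiff T S)⟩

/-- The generator `e_i`. -/
def e (m : ℕ) (i : Fin m) : Cl m := ofCoeff fun S => if S = {i} then 1 else 0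

/-- The embedding of a vector `x ∈ ℝ^m` as `x = Σ_i x_i e_i` in the Clifford algebra. -/
def vec (m : ℕ) (x : Fin m → ℝ) : Cl m := ∑ i : Fin m, (x i : ℂ) • e m i

/-- The Euclidean inner product `⟨x,y⟩ = Σ_i x_i y_i`. -/
def ip (x y : Fin m → ℝ) : ℝ := ∑ i, x i * y i

/-- The Euclidean norm `|x|`. -/
def nrm (x : Fin m → ℝ) : ℝ := Real.sqrt (ip x x)

/-- The wedge product `x∧y = Σ_{j<k} e_j e_k (x_j y_k - x_k y_j)`. -/
def wedge (m : ℕ) (x y : Fin m → ℝ) : Cl m :=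
  ∑ j : Fin m, ∑ k : Fin m,
    if j < k then ((x j * y k - x k * y j : ℝ) : ℂ) • (e m j * e m k) else 0

/-- Complex conjugation of the coefficients. -/
def cconj (a : Cl m) : Cl m := ofCoeff fun S => starRingEnd ℂ (coeff a S)

/-- The Gegenbauer polynomial `C_k^λ(w)`, defined through the standard three-term
recurrence, equivalent to the generating function `(1-2wt+t²)^{-λ} = Σ_k C_k^λ(w) t^k`. -/
def geg (lam : ℝ) : ℕ → ℝ → ℝ
  | 0, _ => 1
  | 1, w => 2 * lam * w
  | (k+2), w => (2 * ((k : ℝ) + 1 + lam) * w * geg lam (k+1) w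
      - ((k : ℝ) + 2 * lam) * geg lam k w) / ((k : ℝ) + 2)

/-- The Bessel function of the first kind
`J_a(z) = Σ_{j≥0} (-1)^j (z/2)^{2j+a} / (j! Γ(j+a+1))`. -/
def besselJ (a z : ℝ) : ℝ :=
  ∑' j : ℕ, ((-1 : ℝ)^j * (z/2) ^ (2*(j:ℝ) + a)) / (j.factorial * Real.Gamma ((j : ℝ) + a + 1))

/-- `A_λ(w,z) = 2^{λ-1} Γ(λ+1) Σ_{k≥0} (u + (-1)^k) z^{-λ} J_{k+λ}(z) C_k^λ(w)`,
where `u` stands for `i^m`. -/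
def AfunU (u : ℂ) (lam w z : ℝ) : ℂ :=
  (((2:ℝ)^(lam - 1) * Real.Gamma (lam + 1) : ℝ) : ℂ) *
    ∑' k : ℕ, (u + (-1 : ℂ)^k) * ((z ^ (-lam) * besselJ ((k : ℝ) + lam) z * geg lam k w : ℝ) : ℂ)

/-- `B_λ(w,z) = -2^{λ-1} Γ(λ) Σ_{k≥0} (k+λ)(u - (-1)^k) z^{-λ} J_{k+λ}(z) C_k^λ(w)`. -/
def BfunU (u : ℂ) (lam w z : ℝ) : ℂ :=
  -(((2:ℝ)^(lam - 1) * Real.Gamma lam : ℝ) : ℂ) *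
    ∑' k : ℕ, ((k : ℂ) + (lam : ℂ)) * (u - (-1 : ℂ)^k) *
      ((z ^ (-lam) * besselJ ((k : ℝ) + lam) z * geg lam k w : ℝ) : ℂ)

/-- `C_λ(w,z) = -2^{λ-1} Γ(λ) Σ_{k≥0} (u + (-1)^k) z^{-λ-1} J_{k+λ}(z) (C_k^λ)'(w)`. -/
def CfunU (u : ℂ) (lam w z : ℝ) : ℂ :=
  -(((2:ℝ)^(lam - 1) * Real.Gamma lam : ℝ) : ℂ) *
    ∑' k : ℕ, (u + (-1 : ℂ)^k) *
      ((z ^ (-lam - 1) * besselJ ((k : ℝ) + lam) z * deriv (geg lam k) w : ℝ) : ℂ)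

/-- The Clifford-Fourier kernel
`K_-(x,y) = A_λ(w,z) + B_λ(w,z) + (x∧y) C_λ(w,z)`
with `λ = (m-2)/2`, `z = |x||y|`, `w = ⟨x,y⟩/(|x||y|)`. -/
def Kminus (m : ℕ) (x y : Fin m → ℝ) : Cl m :=
  (AfunU (Complex.I ^ m) (((m:ℝ) - 2)/2) (ip x y / (nrm x * nrm y)) (nrm x * nrm y)
    + BfunU (Complex.I ^ m) (((m:ℝ) - 2)/2) (ip x y / (nrm x * nrm y)) (nrm x * nrm y)) • (1 : Cl m)
  + CfunU (Complex.I ^ m) (((m:ℝ) - 2)/2) (ip x y / (nrm x * nrm y)) (nrm x * nrm y) • wedge m x y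

/-- The entire function `J̃_a(t) = t^{-a} J_a(t) = Σ_{j≥0} (-1)^j (t/2)^{2j} / (j! Γ(j+a+1) 2^a)`
(for `t > 0` this is literally `t^{-a} J_a(t)`). -/
def besselJt (a t : ℝ) : ℝ :=
  ∑' j : ℕ, ((-1 : ℝ)^j * (t/2) ^ (2*j)) / (j.factorial * Real.Gamma ((j : ℝ) + a + 1) * (2:ℝ)^a)

/-- `A*_{(m-2)/2}(s,t) = Σ_{ℓ=0}^{⌊m/4-3/4⌋} s^{m/2-2-2ℓ} (1/(2^ℓ ℓ!)) Γ(m/2)/Γ(m/2-2ℓ-1) J̃_{(m-2ℓ-3)/2}(t)`. -/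
def Astar (m : ℕ) (s t : ℝ) : ℝ :=
  ∑ l ∈ Finset.range ((m - 3)/4 + 1),
    s ^ (m/2 - 2 - 2*l) * (1 / ((2:ℝ)^l * (l.factorial : ℝ))) *
      (Real.Gamma ((m:ℝ)/2) / Real.Gamma ((m:ℝ)/2 - 2*l - 1)) *
        besselJt (((m:ℝ) - 2*l - 3)/2) t

/-- `B*_{(m-2)/2}(s,t) = -Σ_{ℓ=0}^{⌊m/4-1/2⌋} s^{m/2-1-2ℓ} (1/(2^ℓ ℓ!)) Γ(m/2)/Γ(m/2-2ℓ) J̃_{(m-2ℓ-3)/2}(t)`. -/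
def Bstar (m : ℕ) (s t : ℝ) : ℝ :=
  -∑ l ∈ Finset.range ((m - 2)/4 + 1),
    s ^ (m/2 - 1 - 2*l) * (1 / ((2:ℝ)^l * (l.factorial : ℝ))) *
      (Real.Gamma ((m:ℝ)/2) / Real.Gamma ((m:ℝ)/2 - 2*l)) *
        besselJt (((m:ℝ) - 2*l - 3)/2) t

/-- `C*_{(m-2)/2}(s,t) = -Σ_{ℓ=0}^{⌊m/4-1/2⌋} s^{m/2-1-2ℓ} (1/(2^ℓ ℓ!)) Γ(m/2)/Γ(m/2-2ℓ) J̃_{(m-2ℓ-1)/2}(t)`. -/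
def Cstar (m : ℕ) (s t : ℝ) : ℝ :=
  -∑ l ∈ Finset.range ((m - 2)/4 + 1),
    s ^ (m/2 - 1 - 2*l) * (1 / ((2:ℝ)^l * (l.factorial : ℝ))) *
      (Real.Gamma ((m:ℝ)/2) / Real.Gamma ((m:ℝ)/2 - 2*l)) *
        besselJt (((m:ℝ) - 2*l - 1)/2) t

/-!
For `λ = 1` the Gegenbauer polynomials are the Chebyshev polynomials `U k`, and at `w = cos θ` the
generating function `exp (z (τ - τ⁻¹) / 2) = ∑ J_n(z) τ ^ n` with `τ = exp (i θ)`, together with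
its derivative in `θ`, sums the series to `sin (z sin θ) / sin θ` times `1` or `z cos θ`, that is,
to multiples of `J̃_{1/2}(√(z² - s²))` with `s = z w`.
Since `(C_{k+1}^λ)' = 2 λ C_k^{λ+1}`, the series for `λ = N + 1` are `N`-th derivatives in `w` of
those for `λ = 1`. On the closed form, the functions `φ_a(s) = J̃_a(√(z² - s²))` satisfy
`φ_a' = s φ_{a+1}`, so the `N`-th derivative is a finite sum with the coefficients of a Hermite
polynomial. The endpoints `w = ± 1` follow by continuity.
-/

section Interchange

theorem eqOn_closure_of_hasDerivAt_succ {𝕜 E : Type*} [NontriviallyNormedField 𝕜]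
    [NormedAddCommGroup E] [NormedSpace 𝕜 E] {F G : ℕ → 𝕜 → E} {U : Set 𝕜} (hU : IsOpen U)
    (hF : ∀ N w, HasDerivAt (F N) (F (N + 1) w) w)
    (hG : ∀ N w, HasDerivAt (G N) (G (N + 1) w) w)
    (h0 : Set.EqOn (F 0) (G 0) U) (N : ℕ) : Set.EqOn (F N) (G N) (closure U) := by
  have eqOn_open : Set.EqOn (F N) (G N) U := by
    induction N with
    | zero => exact h0
    | succ N ih =>
      intro w hw
      have eventually_eq : F N =ᶠ[nhds w] G N := ih.eventuallyEq_of_mem (hU.mem_nhds hw)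
      exact (hF N w).unique ((hG N w).congr_of_eventuallyEq eventually_eq)
  exact eqOn_open.closure (continuous_iff_continuousAt.2 fun w => (hF N w).continuousAt)
    (continuous_iff_continuousAt.2 fun w => (hG N w).continuousAt)

/-- The sequence `a` is the coefficient sequence of an entire power series. -/
def IsEntireCoeff (a : ℕ → ℝ) : Prop :=
  ∀ R : ℝ, 0 < R → Summable fun k => |a k| * R ^ k

/-- The functions `p k` grow at most geometrically in `k`, uniformly on bounded sets. -/
def HasGeometricGrowth (p : ℕ → ℝ → ℝ) : Prop :=
  ∀ ρ : ℝ, ∃ C Q : ℝ, 0 < Q ∧ ∀ k w, |w| ≤ ρ → |p k w| ≤ C * Q ^ k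

variable {a : ℕ → ℝ} {p q : ℕ → ℝ → ℝ}

theorem IsEntireCoeff.shift (ha : IsEntireCoeff a) (N : ℕ) :
    IsEntireCoeff fun k => a (k + N) := by
  intro R hR
  refine (((summable_nat_add_iff N).2 (ha R hR)).mul_right (R ^ N)⁻¹).congr fun k => ?_
  rw [pow_add]
  field_simp

theorem IsEntireCoeff.of_abs_le {b : ℕ → ℝ} {C : ℝ} (ha : IsEntireCoeff a)
    (h : ∀ k, |b k| ≤ C * |a k|) : IsEntireCoeff b := fun R hR =>
  ((ha R hR).mul_left C).of_nonneg_of_le (fun _ => by positivity) fun k => by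
    rw [← mul_assoc]
    gcongr
    exact h k

theorem HasGeometricGrowth.const_mul (hp : HasGeometricGrowth p) (c : ℝ) :
    HasGeometricGrowth fun k w => c * p k w := by
  intro ρ
  obtain ⟨C, Q, hQ, bound⟩ := hp ρ
  refine ⟨|c| * C, Q, hQ, fun k w hw => ?_⟩
  rw [abs_mul, mul_assoc]
  gcongr
  exact bound k w hw

theorem hasGeometricGrowth_pow : HasGeometricGrowth fun k x => x ^ k := fun ρ =>
  ⟨1, |ρ| + 1, by positivity, fun k x hx => by
    rw [abs_pow, one_mul]
    gcongr
    linarith [le_abs_self ρ]⟩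

theorem hasGeometricGrowth_succ_mul_pow :
    HasGeometricGrowth fun k x => ((k : ℝ) + 1) * x ^ k := by
  intro ρ
  refine ⟨1, 2 * (|ρ| + 1), by positivity, fun k x hx => ?_⟩
  have succ_le_two_pow : (k : ℝ) + 1 ≤ 2 ^ k := by exact_mod_cast Nat.lt_two_pow_self (n := k)
  rw [abs_mul, abs_pow, one_mul, mul_pow, abs_of_nonneg (by positivity)]
  gcongr
  linarith [le_abs_self ρ]

theorem IsEntireCoeff.exists_summable_bound (ha : IsEntireCoeff a) (hp : HasGeometricGrowth p)
    (ρ : ℝ) : ∃ u : ℕ → ℝ, Summable u ∧ ∀ k w, |w| ≤ ρ → ‖a k * p k w‖ ≤ u k := by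
  obtain ⟨C, Q, hQ, bound⟩ := hp ρ
  refine ⟨fun k => |a k| * Q ^ k * C, (ha Q hQ).mul_right C, fun k w hw => ?_⟩
  calc ‖a k * p k w‖ = |a k| * |p k w| := norm_mul _ _
    _ ≤ |a k| * (C * Q ^ k) := by gcongr; exact bound k w hw
    _ = |a k| * Q ^ k * C := by ring

theorem IsEntireCoeff.summable_mul (ha : IsEntireCoeff a) (hp : HasGeometricGrowth p) (w : ℝ) :
    Summable fun k => a k * p k w := by
  obtain ⟨u, hu, bound⟩ := ha.exists_summable_bound hp |w|
  exact .of_norm_bounded hu fun k => bound k w le_rfl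

theorem IsEntireCoeff.hasDerivAt_tsum (ha : IsEntireCoeff a)
    (hp : HasGeometricGrowth p) (hq : HasGeometricGrowth q)
    (hp_zero : ∀ w, HasDerivAt (p 0) 0 w)
    (hp_succ : ∀ k w, HasDerivAt (p (k + 1)) (q k w) w) (w : ℝ) :
    HasDerivAt (fun w => ∑' k, a k * p k w) (∑' k, a (k + 1) * q k w) w := by
  obtain ⟨u, hu, bound⟩ := (ha.shift 1).exists_summable_bound hq (|w| + 1)
  have mem_ball : w ∈ Metric.ball (0 : ℝ) (|w| + 1) := by simp
  have tail : HasDerivAt (fun w => ∑' k, a (k + 1) * p (k + 1) w) (∑' k, a (k + 1) * q k w) w :=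
    hasDerivAt_tsum_of_isPreconnected hu Metric.isOpen_ball
      (convex_ball (0 : ℝ) (|w| + 1)).isPreconnected (fun k v _ => (hp_succ k v).const_mul _)
      (fun k v hv => bound k v (mem_ball_zero_iff.1 hv).le) mem_ball
      ((summable_nat_add_iff 1).2 (ha.summable_mul hp w)) mem_ball
  have split_zero : (fun w => ∑' k, a k * p k w)
      = fun w => a 0 * p 0 w + ∑' k, a (k + 1) * p (k + 1) w :=
    funext fun v => (ha.summable_mul hp v).tsum_eq_zero_add
  rw [split_zero]
  simpa using ((hp_zero w).const_mul (a 0)).fun_add tail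

end Interchange

section Hermite

/-- The coefficients `N! / (2 ^ l l! (N - 2 l)!)` of the Hermite polynomials; they vanish for
`N < 2 l`. -/
def hermiteCoeff (N l : ℕ) : ℝ := N.descFactorial (2 * l) / (2 ^ l * l.factorial)

theorem hermiteCoeff_zero_right (N : ℕ) : hermiteCoeff N 0 = 1 := by simp [hermiteCoeff]

theorem hermiteCoeff_eq_zero {N l : ℕ} (h : N < 2 * l) : hermiteCoeff N l = 0 := by
  simp [hermiteCoeff, Nat.descFactorial_eq_zero_iff_lt.2 h]

theorem hermiteCoeff_succ_succ (N l : ℕ) :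
    hermiteCoeff (N + 1) (l + 1) = hermiteCoeff N (l + 1) + (N - 2 * l : ℕ) * hermiteCoeff N l := by
  have pascal : ((N + 1).descFactorial (2 * l + 2) : ℝ)
      = N.descFactorial (2 * l + 2) + 2 * (l + 1) * (N - 2 * l : ℕ) * N.descFactorial (2 * l) := by
    rcases lt_or_ge N (2 * l + 1) with hN | hN
    · rw [Nat.succ_descFactorial_succ, Nat.descFactorial_eq_zero_iff_lt.2 hN,
        Nat.descFactorial_eq_zero_iff_lt.2 (by omega : N < 2 * l + 2),
        (by omega : N - 2 * l = 0)]
      simp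
    · rw [Nat.succ_descFactorial_succ, Nat.descFactorial_succ N (2 * l + 1),
        Nat.descFactorial_succ N (2 * l)]
      push_cast [hN, (by omega : 2 * l ≤ N)]
      ring
  simp only [hermiteCoeff, Nat.mul_succ, pascal, Nat.factorial_succ, pow_succ, Nat.cast_mul,
    Nat.cast_succ]
  field_simp

/-- The shape of the `N`-th derivative of `φ 0` when `(φ i)' = s * φ (i + 1)`. For
`φ i s = exp (s ^ 2 / 2)` it is, up to the exponential factor, a Hermite polynomial with positive
signs. -/
def hermiteSum (φ : ℕ → ℝ → ℝ) (N : ℕ) (s : ℝ) : ℝ :=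
  ∑ l ∈ Finset.range (N + 1), hermiteCoeff N l * (s ^ (N - 2 * l) * φ (N - l) s)

theorem hermiteSum_zero (φ : ℕ → ℝ → ℝ) (s : ℝ) : hermiteSum φ 0 s = φ 0 s := by
  simp [hermiteSum, hermiteCoeff_zero_right]

theorem hermiteSum_one (φ : ℕ → ℝ → ℝ) (s : ℝ) : hermiteSum φ 1 s = s * φ 1 s := by
  simp [hermiteSum, Finset.sum_range_succ, hermiteCoeff_zero_right, hermiteCoeff_eq_zero]

theorem hermiteSum_eq_sum_range_half (φ : ℕ → ℝ → ℝ) (N : ℕ) (s : ℝ) :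
    hermiteSum φ N s
      = ∑ l ∈ Finset.range (N / 2 + 1), hermiteCoeff N l * (s ^ (N - 2 * l) * φ (N - l) s) := by
  refine (Finset.sum_subset (Finset.range_subset_range.2 (by omega)) fun l _ hl => ?_).symm
  rw [hermiteCoeff_eq_zero (by rw [Finset.mem_range] at hl; omega), zero_mul]

theorem hasDerivAt_hermiteSum {φ : ℕ → ℝ → ℝ}
    (hφ : ∀ i s, HasDerivAt (φ i) (s * φ (i + 1) s) s) (N : ℕ) (s : ℝ) :
    HasDerivAt (hermiteSum φ N) (hermiteSum φ (N + 1) s) s := by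
  have term_deriv (l : ℕ) : HasDerivAt (fun s => s ^ (N - 2 * l) * φ (N - l) s)
      ((N - 2 * l : ℕ) * s ^ (N - 2 * l - 1) * φ (N - l) s
        + s ^ (N - 2 * l) * (s * φ (N - l + 1) s)) s := by
    exact (hasDerivAt_pow _ s).fun_mul (hφ _ s)
  refine (HasDerivAt.fun_sum fun l _ => (term_deriv l).const_mul (hermiteCoeff N l)).congr_deriv ?_
  have raise_power (l : ℕ) : hermiteCoeff N l * (s ^ (N - 2 * l) * (s * φ (N - l + 1) s))
      = hermiteCoeff N l * (s ^ (N + 1 - 2 * l) * φ (N + 1 - l) s) := by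
    rcases lt_or_ge N (2 * l) with hl | hl
    · simp [hermiteCoeff_eq_zero hl]
    · rw [Nat.sub_add_comm hl, Nat.sub_add_comm (by omega : l ≤ N), pow_succ]
      ring
  have shift_index (l : ℕ) : N + 1 - 2 * (l + 1) = N - 2 * l - 1 ∧ N + 1 - (l + 1) = N - l := by
    omega
  have top_vanishes : hermiteCoeff N (N + 1) = 0 := hermiteCoeff_eq_zero (by omega)
  calc _ = ∑ l ∈ Finset.range (N + 1),
          (N - 2 * l : ℕ) * hermiteCoeff N l * (s ^ (N - 2 * l - 1) * φ (N - l) s)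
        + ∑ l ∈ Finset.range (N + 2),
          hermiteCoeff N l * (s ^ (N + 1 - 2 * l) * φ (N + 1 - l) s) := by
        rw [Finset.sum_range_succ _ (N + 1), top_vanishes, zero_mul, add_zero,
          ← Finset.sum_add_distrib]
        refine Finset.sum_congr rfl fun l _ => ?_
        rw [mul_add, raise_power]
        ring
    _ = hermiteSum φ (N + 1) s := by
        rw [hermiteSum, Finset.sum_range_succ' _ (N + 1), Finset.sum_range_succ' _ (N + 1),
          ← add_assoc, ← Finset.sum_add_distrib, hermiteCoeff_zero_right, hermiteCoeff_zero_right]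
        congr 1
        refine Finset.sum_congr rfl fun l _ => ?_
        rw [(shift_index l).1, (shift_index l).2, hermiteCoeff_succ_succ]
        ring

end Hermite

section BesselClifford

/-- The Bessel–Clifford function `∑ x ^ j / (j! Γ(j + a + 1))`. -/
def besselClifford (a x : ℝ) : ℝ :=
  ∑' j : ℕ, 1 / (j.factorial * Real.Gamma (j + a + 1)) * x ^ j

theorem isEntireCoeff_besselClifford (a : ℝ) :
    IsEntireCoeff fun j => 1 / (j.factorial * Real.Gamma (j + a + 1)) := by
  intro R hR
  lift R to NNReal using hR.le
  have radius_top : (Complex.regularizedHGFunSeries 0 {(a : ℂ) + 1}).radius = ⊤ :=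
    Complex.radius_regularizedHGFunSeries_eq_top (by simp)
  refine (FormalMultilinearSeries.summable_norm_mul_pow _
    (radius_top ▸ ENNReal.coe_lt_top : (R : ENNReal) < _)).congr fun j => ?_
  have norm_eq : ‖Complex.regularizedHGFunCoeff 0 {(a : ℂ) + 1} j‖
      = ‖((1 / (j.factorial * Real.Gamma (j + a + 1)) : ℝ) : ℂ)‖ := by
    congr 1
    push_cast [← Complex.Gamma_ofReal]
    rw [add_assoc, add_comm (j : ℂ)]
    simp [Complex.regularizedHGFunCoeff]
  rw [Complex.regularizedHGFunSeries, FormalMultilinearSeries.ofScalars_norm, norm_eq,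
    Complex.norm_real]
  rfl

theorem hasDerivAt_besselClifford (a x : ℝ) :
    HasDerivAt (besselClifford a) (besselClifford (a + 1) x) x := by
  have := (isEntireCoeff_besselClifford a).hasDerivAt_tsum hasGeometricGrowth_pow
    hasGeometricGrowth_succ_mul_pow (fun x => by simpa using hasDerivAt_const x (1 : ℝ))
    (fun k x => by simpa using hasDerivAt_pow (k + 1) x) x
  refine this.congr_deriv (tsum_congr fun j => ?_)
  rw [Nat.factorial_succ, show ((j + 1 : ℕ) : ℝ) + a + 1 = j + (a + 1) + 1 by push_cast; ring]
  push_cast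
  field_simp

/-- The entire continuation to all real `s` of `s ↦ J̃_a(√(z² - s²))`. -/
def besselJtSqrt (a z s : ℝ) : ℝ := 2 ^ (-a) * besselClifford a ((s ^ 2 - z ^ 2) / 4)

theorem besselJtSqrt_eq_besselJt (a : ℝ) {z s t : ℝ} (h : t ^ 2 = z ^ 2 - s ^ 2) :
    besselJtSqrt a z s = besselJt a t := by
  rw [besselJtSqrt, besselJt, besselClifford, ← tsum_mul_left]
  refine tsum_congr fun j => ?_
  rw [pow_mul, ← mul_pow, show (s ^ 2 - z ^ 2) / 4 = -1 * (t / 2) ^ 2 by rw [div_pow, h]; ring,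
    Real.rpow_neg zero_le_two]
  field_simp

theorem hasDerivAt_besselJtSqrt (a z s : ℝ) :
    HasDerivAt (besselJtSqrt a z) (s * besselJtSqrt (a + 1) z s) s := by
  have inner_deriv : HasDerivAt (fun s : ℝ => (s ^ 2 - z ^ 2) / 4) (s / 2) s :=
    (((hasDerivAt_pow 2 s).sub_const _).div_const 4).congr_deriv (by norm_num; ring)
  refine (((hasDerivAt_besselClifford a _).comp s inner_deriv).const_mul _).congr_deriv ?_
  rw [besselJtSqrt, neg_add, Real.rpow_add zero_lt_two, Real.rpow_neg_one]
  ring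

theorem mul_sqrt_pi_div_two_mul_besselJt_half (t : ℝ) :
    t * (√(Real.pi / 2) * besselJt (1 / 2) t) = Real.sin t := by
  rw [← (Real.hasSum_sin t).tsum_eq, besselJt, ← tsum_mul_left, ← tsum_mul_left]
  refine tsum_congr fun j => ?_
  have duplication : (j.factorial : ℝ) * Real.Gamma (j + 1 / 2 + 1)
      = (2 * j + 1).factorial * (2 ^ (2 * j + 1))⁻¹ * √Real.pi := by
    have := Real.Gamma_mul_Gamma_add_half ((j : ℝ) + 1)
    rw [Real.Gamma_nat_eq_factorial,
      show 2 * ((j : ℝ) + 1) = (2 * j + 1 : ℕ) + 1 by push_cast; ring,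
      Real.Gamma_nat_eq_factorial, sub_add_cancel_right, Real.rpow_neg_natCast] at this
    rw [add_right_comm, this, zpow_neg, zpow_natCast]
  have sqrt_two_sq : √(2 : ℝ) ^ 2 = 2 := Real.sq_sqrt zero_le_two
  rw [duplication, ← Real.sqrt_eq_rpow, Real.sqrt_div Real.pi_pos.le, div_pow, pow_succ t,
    pow_succ (2 : ℝ)]
  field_simp
  rw [sqrt_two_sq]
  ring

/-- The finite sums of Bessel functions in the explicit kernel: `besselHermiteSum a z N` is
`∑ l, N! / (2 ^ l l! (N - 2 l)!) s ^ (N - 2 l) J̃_{a + N - l}(√(z² - s²))`. -/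
def besselHermiteSum (a z : ℝ) : ℕ → ℝ → ℝ := hermiteSum fun i => besselJtSqrt (a + i) z

theorem hasDerivAt_besselHermiteSum (a z : ℝ) (N : ℕ) (s : ℝ) :
    HasDerivAt (besselHermiteSum a z N) (besselHermiteSum a z (N + 1) s) s :=
  hasDerivAt_hermiteSum (fun i s => by
    simpa only [Nat.cast_succ, add_assoc] using hasDerivAt_besselJtSqrt (a + i) z s) N s

end BesselClifford

section Gegenbauer

theorem geg_zero (lam w : ℝ) : geg lam 0 w = 1 := by rw [geg]

theorem geg_one (lam w : ℝ) : geg lam 1 w = 2 * lam * w := by rw [geg]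

theorem geg_add_two (lam w : ℝ) (k : ℕ) :
    (k + 2) * geg lam (k + 2) w
      = 2 * (k + 1 + lam) * w * geg lam (k + 1) w - (k + 2 * lam) * geg lam k w := by
  rw [geg]
  field_simp

theorem geg_contiguous_upper_of_lower {lam w : ℝ} {k : ℕ}
    (lower : (k + 2) * geg lam (k + 2) w
      = 2 * lam * (w * geg (lam + 1) (k + 1) w - geg (lam + 1) k w)) :
    (k + 2 + 2 * lam) * geg lam (k + 2) w
      = 2 * lam * (geg (lam + 1) (k + 2) w - w * geg (lam + 1) (k + 1) w) := by
  refine mul_left_cancel₀ (by positivity : (k : ℝ) + 2 ≠ 0) ?_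
  linear_combination (k + 2 + 2 * lam) * lower - 2 * lam * geg_add_two (lam + 1) w k

theorem geg_contiguous_lower (lam w : ℝ) (k : ℕ) :
    (k + 2) * geg lam (k + 2) w
      = 2 * lam * (w * geg (lam + 1) (k + 1) w - geg (lam + 1) k w) := by
  induction k using Nat.twoStepInduction with
  | zero =>
    have recurrence := geg_add_two lam w 0
    simp only [geg_zero, geg_one, zero_add] at recurrence ⊢
    rw [recurrence]
    push_cast
    ring
  | one =>
    have recurrence := geg_add_two lam w 1
    have recurrence_zero := geg_add_two lam w 0
    have recurrence_succ := geg_add_two (lam + 1) w 0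
    simp only [geg_zero, geg_one, zero_add, Nat.reduceAdd]
      at recurrence recurrence_zero recurrence_succ ⊢
    push_cast at *
    linear_combination recurrence + w * (2 + lam) * recurrence_zero - lam * w * recurrence_succ
  | more k lower lower_succ =>
    have recurrence := geg_add_two lam w (k + 2)
    have upper := geg_contiguous_upper_of_lower lower
    have upper_succ := geg_contiguous_upper_of_lower lower_succ
    push_cast at *
    linear_combination recurrence + w * lower_succ + w * upper_succ - upper

theorem add_lam_mul_geg_add_two (lam w : ℝ) (k : ℕ) :
    (k + 2 + lam) * geg lam (k + 2) w = lam * (geg (lam + 1) (k + 2) w - geg (lam + 1) k w) := by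
  have lower := geg_contiguous_lower lam w k
  linear_combination (lower + geg_contiguous_upper_of_lower lower) / 2

theorem hasDerivAt_geg_zero (lam w : ℝ) : HasDerivAt (geg lam 0) 0 w := by
  rw [show geg lam 0 = fun _ => 1 from funext (geg_zero lam)]
  exact hasDerivAt_const w 1

theorem hasDerivAt_geg_add_two {lam w d₀ d₁ : ℝ} {k : ℕ} (h₀ : HasDerivAt (geg lam k) d₀ w)
    (h₁ : HasDerivAt (geg lam (k + 1)) d₁ w) :
    HasDerivAt (geg lam (k + 2)) ((2 * (k + 1 + lam) * (geg lam (k + 1) w + w * d₁)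
      - (k + 2 * lam) * d₀) / (k + 2)) w := by
  have recurrence : geg lam (k + 2) = fun w =>
      (2 * (k + 1 + lam) * (w * geg lam (k + 1) w) - (k + 2 * lam) * geg lam k w) / (k + 2) := by
    funext w
    rw [geg, mul_assoc (2 * _)]
  rw [recurrence]
  simpa using ((((hasDerivAt_id w).fun_mul h₁).const_mul (2 * ((k : ℝ) + 1 + lam))).fun_sub
    (h₀.const_mul ((k : ℝ) + 2 * lam))).div_const ((k : ℝ) + 2)

theorem hasDerivAt_geg_succ (lam w : ℝ) (k : ℕ) :
    HasDerivAt (geg lam (k + 1)) (2 * lam * geg (lam + 1) k w) w := by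
  have deriv_one : HasDerivAt (geg lam 1) (2 * lam * geg (lam + 1) 0 w) w := by
    rw [geg_zero, show geg lam 1 = fun w => 2 * lam * w from funext (geg_one lam)]
    simpa using (hasDerivAt_id w).const_mul (2 * lam)
  induction k using Nat.twoStepInduction with
  | zero => exact deriv_one
  | one =>
    refine (hasDerivAt_geg_add_two (hasDerivAt_geg_zero lam w) deriv_one).congr_deriv ?_
    simp only [geg_zero, geg_one, zero_add]
    push_cast
    ring
  | more k ih ih_succ =>
    refine (hasDerivAt_geg_add_two ih ih_succ).congr_deriv ?_
    push_cast
    rw [div_eq_iff (by positivity)]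
    linear_combination 2 * add_lam_mul_geg_add_two lam w k - 2 * lam * geg_add_two (lam + 1) w k

theorem abs_geg_le (lam : ℝ) {ρ w : ℝ} (hw : |w| ≤ ρ) (k : ℕ) :
    |geg lam k w| ≤ ((1 + |lam|) * (2 * ρ + 1)) ^ k := by
  have hρ : 0 ≤ ρ := (abs_nonneg w).trans hw
  have hlam : 0 ≤ |lam| := abs_nonneg lam
  have one_le_base : 1 ≤ (1 + |lam|) * (2 * ρ + 1) := by nlinarith [mul_nonneg hlam hρ]
  set Q := (1 + |lam|) * (2 * ρ + 1) with hQ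
  induction k using Nat.twoStepInduction with
  | zero => simp [geg_zero]
  | one =>
    rw [geg_one, abs_mul, abs_mul, abs_two, pow_one]
    nlinarith [mul_nonneg hlam hρ, mul_le_mul_of_nonneg_left hw hlam]
  | more k ih ih_succ =>
    have abs_coeff_one : |2 * (k + 1 + lam) * w| ≤ 2 * ((1 + |lam|) * (k + 2)) * ρ := by
      rw [abs_mul, abs_mul, abs_two]
      gcongr
      calc |(k : ℝ) + 1 + lam| ≤ k + 1 + |lam| := by
            simpa [abs_of_nonneg (by positivity : (0 : ℝ) ≤ k + 1)]
              using abs_add_le ((k : ℝ) + 1) lam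
        _ ≤ (1 + |lam|) * (k + 2) := by nlinarith [mul_nonneg hlam k.cast_nonneg]
    have abs_coeff_zero : |k + 2 * lam| ≤ (1 + |lam|) * (k + 2) := by
      calc |(k : ℝ) + 2 * lam| ≤ k + 2 * |lam| := by
            simpa [abs_mul] using abs_add_le (k : ℝ) (2 * lam)
        _ ≤ (1 + |lam|) * (k + 2) := by nlinarith [mul_nonneg hlam k.cast_nonneg]
    have ih' : |geg lam k w| ≤ Q ^ (k + 1) := ih.trans (pow_le_pow_right₀ one_le_base k.le_succ)
    rw [geg, abs_div, abs_of_pos (by positivity : (0 : ℝ) < k + 2), div_le_iff₀ (by positivity)]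
    calc |2 * (k + 1 + lam) * w * geg lam (k + 1) w - (k + 2 * lam) * geg lam k w|
        ≤ |2 * (k + 1 + lam) * w| * |geg lam (k + 1) w| + |k + 2 * lam| * |geg lam k w| := by
          rw [← abs_mul, ← abs_mul]
          exact abs_sub _ _
      _ ≤ 2 * ((1 + |lam|) * (k + 2)) * ρ * Q ^ (k + 1) + (1 + |lam|) * (k + 2) * Q ^ (k + 1) := by
          gcongr
      _ = Q ^ (k + 2) * (k + 2) := by rw [pow_succ Q (k + 1), hQ]; ring

theorem hasGeometricGrowth_geg (lam : ℝ) : HasGeometricGrowth (geg lam) := fun ρ =>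
  ⟨1, (1 + |lam|) * (2 * |ρ| + 1), by positivity, fun k w hw => by
    rw [one_mul]
    exact abs_geg_le lam (hw.trans (le_abs_self ρ)) k⟩

theorem geg_one_eq_eval_chebyshevU (k : ℕ) (w : ℝ) :
    geg 1 k w = (Polynomial.Chebyshev.U ℝ k).eval w := by
  induction k using Nat.twoStepInduction with
  | zero => simp [geg_zero]
  | one => simp [geg_one]
  | more k ih ih_succ =>
    refine mul_left_cancel₀ (by positivity : (k : ℝ) + 2 ≠ 0) ?_
    rw [geg_add_two, ih, ih_succ]
    push_cast
    rw [Polynomial.Chebyshev.U_add_two]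
    simp only [Polynomial.eval_sub, Polynomial.eval_mul, Polynomial.eval_X, Polynomial.eval_ofNat]
    ring

theorem geg_one_cos_mul_sin (k : ℕ) (θ : ℝ) :
    geg 1 k (Real.cos θ) * Real.sin θ = Real.sin ((k + 1) * θ) := by
  rw [geg_one_eq_eval_chebyshevU]
  exact_mod_cast Polynomial.Chebyshev.U_real_cos θ k

/-- The `N`-th derivative of the Chebyshev series `∑ a k * U k`. -/
def gegSeries (a : ℕ → ℝ) (N : ℕ) (w : ℝ) : ℝ :=
  2 ^ N * N.factorial * ∑' k, a (k + N) * geg (N + 1) k w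

theorem hasDerivAt_gegSeries {a : ℕ → ℝ} (ha : IsEntireCoeff a) (N : ℕ) (w : ℝ) :
    HasDerivAt (gegSeries a N) (gegSeries a (N + 1) w) w := by
  have series_deriv := (ha.shift N).hasDerivAt_tsum (hasGeometricGrowth_geg ((N : ℝ) + 1))
    ((hasGeometricGrowth_geg _).const_mul _) (hasDerivAt_geg_zero _)
    (fun k w => hasDerivAt_geg_succ _ w k) w
  refine (series_deriv.const_mul (2 ^ N * (N.factorial : ℝ))).congr_deriv ?_
  simp only [mul_left_comm _ (2 * ((N : ℝ) + 1)), tsum_mul_left, add_right_comm _ 1 N]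
  rw [gegSeries, Nat.factorial_succ]
  simp only [← add_assoc]
  push_cast
  ring

end Gegenbauer

section BesselGeneratingFunction

theorem hasSum_pow_div_factorial (x : ℂ) :
    HasSum (fun n : ℕ => x ^ n / n.factorial) (Complex.exp x) := by
  rw [Complex.exp_eq_exp_ℂ]
  exact NormedSpace.expSeries_div_hasSum_exp x

theorem hasSum_natCast_mul_pow_div_factorial (x : ℂ) :
    HasSum (fun n : ℕ => n * (x ^ n / n.factorial)) (x * Complex.exp x) := by
  refine (hasSum_nat_add_iff' 1).1 ?_
  simp only [Finset.range_one, Finset.sum_singleton, Nat.cast_zero, zero_mul, sub_zero]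
  refine ((hasSum_pow_div_factorial x).mul_left x).congr_fun fun n => ?_
  rw [Nat.factorial_succ, pow_succ]
  push_cast
  field_simp

theorem hasSum_mul_prod {ι κ : Type*} {f : ι → ℂ} {g : κ → ℂ} {F G : ℂ} (hf : HasSum f F)
    (hg : HasSum g G) : HasSum (fun p : ι × κ => f p.1 * g p.2) (F * G) :=
  hf.mul hg (summable_mul_of_summable_norm hf.summable.norm hg.summable.norm)

/-- The `j`-th term of the series `besselJ n z`. For `j + n < 0` it vanishes because Mathlib's
`Γ` is `0` at its poles and `x / 0 = 0`, so that `besselJ` has the correct value `(-1) ^ n J_n`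
at negative integer orders `-n`. -/
def besselJTerm (z : ℝ) (n : ℤ) (j : ℕ) : ℝ :=
  (-1) ^ j * (z / 2) ^ (2 * (j : ℝ) + n) / (j.factorial * Real.Gamma (j + n + 1))

theorem besselJTerm_sub (z : ℝ) (p q : ℕ) :
    besselJTerm z (p - q) q = (-1) ^ q * (z / 2) ^ (p + q) / (q.factorial * p.factorial) := by
  rw [besselJTerm, show 2 * (q : ℝ) + ((p - q : ℤ) : ℝ) = (p + q : ℕ) by push_cast; ring,
    Real.rpow_natCast, show (q : ℝ) + ((p - q : ℤ) : ℝ) = p by push_cast; ring,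
    Real.Gamma_nat_eq_factorial]

theorem besselJTerm_eq_zero (z : ℝ) {n : ℤ} {j : ℕ} (h : j + n < 0) : besselJTerm z n j = 0 := by
  obtain ⟨k, hk⟩ : ∃ k : ℕ, (j : ℤ) + n + 1 = -k := ⟨(-(j + n + 1)).toNat, by omega⟩
  have pole : (j : ℝ) + n + 1 = -k := by exact_mod_cast hk
  rw [besselJTerm, pole, Real.Gamma_neg_nat_eq_zero, mul_zero, div_zero]

theorem besselJ_neg_natCast (n : ℕ) (z : ℝ) : besselJ (-n) z = (-1) ^ n * besselJ n z := by
  have shift (j : ℕ) : besselJTerm z (-n) (j + n) = (-1) ^ n * besselJTerm z n j := by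
    rw [show -(n : ℤ) = j - (j + n : ℕ) by push_cast; ring,
      show (n : ℤ) = (j + n : ℕ) - j by push_cast; ring, besselJTerm_sub, besselJTerm_sub,
      pow_add, add_comm j]
    ring
  have support_subset : Function.support (besselJTerm z (-n)) ⊆ Set.range (· + n) := by
    intro j hj
    refine ⟨j - n, Nat.sub_add_cancel ?_⟩
    by_contra! hjn
    exact hj (besselJTerm_eq_zero z (by omega))
  calc besselJ (-n) z = ∑' j, besselJTerm z (-n) j := by simp [besselJ, besselJTerm]
    _ = ∑' j, besselJTerm z (-n) (j + n) := ((add_left_injective n).tsum_eq support_subset).symm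
    _ = (-1) ^ n * besselJ n z := by simp only [shift, tsum_mul_left]; rfl

theorem hasSum_mul_besselJ_mul_zpow_of_prod {z : ℝ} {τ S : ℂ} (hτ : τ ≠ 0) (φ : ℤ → ℂ)
    (h : HasSum (fun p : ℕ × ℕ => φ (p.1 - p.2) *
      ((z / 2 * τ) ^ p.1 / p.1.factorial * ((-(z / 2) * τ⁻¹) ^ p.2 / p.2.factorial))) S) :
    HasSum (fun n : ℤ => φ n * (besselJ n z * τ ^ n)) S := by
  have injective : Function.Injective fun p : ℕ × ℕ => ((p.1 : ℤ) - p.2, p.2) := by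
    rintro ⟨p, q⟩ ⟨p', q'⟩ heq
    simp only [Prod.mk.injEq] at heq ⊢
    omega
  have reindexed : HasSum (fun r : ℤ × ℕ => φ r.1 * τ ^ r.1 * besselJTerm z r.1 r.2) S := by
    refine (injective.hasSum_iff ?_).1 (h.congr_fun fun p => ?_)
    · rintro ⟨n, q⟩ hnq
      rw [besselJTerm_eq_zero, Complex.ofReal_zero, mul_zero]
      by_contra! hn
      exact hnq ⟨((n + q).toNat, q), by simp only [Prod.mk.injEq, and_true]; omega⟩
    · simp only [Function.comp_apply, besselJTerm_sub]
      rw [zpow_sub₀ hτ, zpow_natCast, zpow_natCast]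
      push_cast
      rw [pow_add, neg_mul, neg_pow (z / 2 * τ⁻¹ : ℂ), mul_pow, mul_pow, inv_pow]
      field_simp
  have fiberwise := reindexed.prod_fiberwise fun n => (reindexed.summable.prod_factor n).hasSum
  refine fiberwise.congr_fun fun n => ?_
  simp only [tsum_mul_left]
  rw [← Complex.ofReal_tsum, mul_assoc, mul_comm (τ ^ n)]
  rfl

theorem hasSum_besselJ_mul_zpow (z : ℝ) {τ : ℂ} (hτ : τ ≠ 0) :
    HasSum (fun n : ℤ => besselJ n z * τ ^ n) (Complex.exp (z / 2 * τ + -(z / 2) * τ⁻¹)) := by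
  have product := hasSum_mul_prod (hasSum_pow_div_factorial (z / 2 * τ))
    (hasSum_pow_div_factorial (-(z / 2) * τ⁻¹))
  rw [← Complex.exp_add] at product
  simpa only [one_mul] using
    hasSum_mul_besselJ_mul_zpow_of_prod hτ (fun _ => 1) (by simpa only [one_mul] using product)

theorem hasSum_intCast_mul_besselJ_mul_zpow (z : ℝ) {τ : ℂ} (hτ : τ ≠ 0) :
    HasSum (fun n : ℤ => n * (besselJ n z * τ ^ n))
      ((z / 2 * τ - -(z / 2) * τ⁻¹) * Complex.exp (z / 2 * τ + -(z / 2) * τ⁻¹)) := by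
  set x := z / 2 * τ
  set y := -(z / 2) * τ⁻¹
  have first := hasSum_mul_prod (hasSum_natCast_mul_pow_div_factorial x)
    (hasSum_pow_div_factorial y)
  have second := hasSum_mul_prod (hasSum_pow_div_factorial x)
    (hasSum_natCast_mul_pow_div_factorial y)
  have difference := first.sub second
  rw [show x * Complex.exp x * Complex.exp y - Complex.exp x * (y * Complex.exp y)
    = (x - y) * Complex.exp (x + y) by rw [Complex.exp_add]; ring] at difference
  refine hasSum_mul_besselJ_mul_zpow_of_prod hτ (fun n => n) (difference.congr_fun fun p => ?_)
  push_cast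
  ring

theorem isEntireCoeff_natCast_mul_besselJ (z : ℝ) :
    IsEntireCoeff fun n => n * besselJ n z := by
  intro R hR
  have laurent := hasSum_intCast_mul_besselJ_mul_zpow z (Complex.ofReal_ne_zero.2 hR.ne')
  refine (laurent.summable.norm.comp_injective Nat.cast_injective).congr fun n => ?_
  simp [abs_of_pos hR, mul_assoc]

theorem zpow_exp_mul_I_im (θ : ℝ) (n : ℤ) :
    (Complex.exp (θ * Complex.I) ^ n).im = Real.sin (n * θ) := by
  rw [← Complex.exp_int_mul, ← mul_assoc]
  exact_mod_cast Complex.exp_ofReal_mul_I_im (n * θ)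

theorem half_mul_exp_add (z θ : ℝ) :
    (z / 2 * Complex.exp (θ * Complex.I) + -(z / 2) * (Complex.exp (θ * Complex.I))⁻¹ : ℂ)
      = (z * Real.sin θ : ℝ) * Complex.I := by
  rw [← Complex.exp_neg, ← neg_mul, Complex.exp_mul_I, Complex.exp_mul_I, Complex.cos_neg,
    Complex.sin_neg]
  push_cast
  ring

theorem half_mul_exp_sub (z θ : ℝ) :
    (z / 2 * Complex.exp (θ * Complex.I) - -(z / 2) * (Complex.exp (θ * Complex.I))⁻¹ : ℂ)
      = (z * Real.cos θ : ℝ) := by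
  rw [← Complex.exp_neg, ← neg_mul, Complex.exp_mul_I, Complex.exp_mul_I, Complex.cos_neg,
    Complex.sin_neg]
  push_cast
  ring

theorem hasSum_besselJ_mul_sin (z θ : ℝ) :
    HasSum (fun n : ℕ => (1 - (-1) ^ n) * besselJ n z * Real.sin (n * θ))
      (Real.sin (z * Real.sin θ)) := by
  have laurent := Complex.hasSum_im
    (hasSum_besselJ_mul_zpow z (Complex.exp_ne_zero (θ * Complex.I)))
  rw [half_mul_exp_add, Complex.exp_ofReal_mul_I_im] at laurent
  simp only [Complex.im_ofReal_mul, zpow_exp_mul_I_im] at laurent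
  have folded := laurent.nat_add_neg
  simp only [Int.cast_zero, zero_mul, Real.sin_zero, mul_zero, add_zero] at folded
  refine folded.congr_fun fun n => ?_
  push_cast
  rw [besselJ_neg_natCast, neg_mul, Real.sin_neg]
  ring

theorem hasSum_natCast_mul_besselJ_mul_sin (z θ : ℝ) :
    HasSum (fun n : ℕ => n * (1 + (-1) ^ n) * besselJ n z * Real.sin (n * θ))
      (z * Real.cos θ * Real.sin (z * Real.sin θ)) := by
  have laurent := Complex.hasSum_im
    (hasSum_intCast_mul_besselJ_mul_zpow z (Complex.exp_ne_zero (θ * Complex.I)))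
  rw [half_mul_exp_sub, half_mul_exp_add, Complex.im_ofReal_mul,
    Complex.exp_ofReal_mul_I_im] at laurent
  simp only [← Complex.ofReal_intCast, Complex.im_ofReal_mul, zpow_exp_mul_I_im] at laurent
  have folded := laurent.nat_add_neg
  simp only [Int.cast_zero, zero_mul, add_zero] at folded
  refine folded.congr_fun fun n => ?_
  push_cast
  rw [besselJ_neg_natCast, neg_mul _ θ, Real.sin_neg]
  ring

end BesselGeneratingFunction

section KernelSeries

/-- Coefficients of the Chebyshev series whose derivatives yield `A_λ` and `C_λ`. -/
def evenBessel (z : ℝ) (k : ℕ) : ℝ := (1 + (-1) ^ k) * besselJ (k + 1) z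

/-- Coefficients of the Chebyshev series whose derivatives yield `B_λ`. -/
def oddBessel (z : ℝ) (k : ℕ) : ℝ := (k + 1) * (1 - (-1) ^ k) * besselJ (k + 1) z

theorem isEntireCoeff_evenBessel (z : ℝ) : IsEntireCoeff (evenBessel z) := by
  refine ((isEntireCoeff_natCast_mul_besselJ z).shift 1).of_abs_le (C := 2) fun k => ?_
  have sign_le : |1 + (-1 : ℝ) ^ k| ≤ 2 := by
    rcases neg_one_pow_eq_or ℝ k with h | h <;> norm_num [h]
  push_cast
  rw [evenBessel, abs_mul, abs_mul, abs_of_pos (by positivity : (0 : ℝ) < k + 1)]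
  gcongr
  exact le_mul_of_one_le_left (abs_nonneg _) (by simp)

theorem isEntireCoeff_oddBessel (z : ℝ) : IsEntireCoeff (oddBessel z) := by
  refine ((isEntireCoeff_natCast_mul_besselJ z).shift 1).of_abs_le (C := 2) fun k => ?_
  have sign_le : |1 - (-1 : ℝ) ^ k| ≤ 2 := by
    rcases neg_one_pow_eq_or ℝ k with h | h <;> norm_num [h]
  push_cast
  rw [oddBessel, mul_right_comm, abs_mul, mul_comm]
  gcongr

theorem gegSeries_evenBessel_zero_mul_sin (z θ : ℝ) :
    gegSeries (evenBessel z) 0 (Real.cos θ) * Real.sin θ = Real.sin (z * Real.sin θ) := by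
  have shifted := (hasSum_nat_add_iff' 1).2 (hasSum_besselJ_mul_sin z θ)
  simp only [Finset.range_one, Finset.sum_singleton, Nat.cast_zero, zero_mul, Real.sin_zero,
    mul_zero, sub_zero] at shifted
  simp only [← shifted.tsum_eq, gegSeries, pow_zero, Nat.factorial_zero, Nat.cast_one, one_mul,
    Nat.cast_zero, zero_add, add_zero, ← tsum_mul_right]
  refine tsum_congr fun k => ?_
  rw [mul_assoc, geg_one_cos_mul_sin, evenBessel, pow_succ]
  push_cast
  ring

theorem gegSeries_oddBessel_zero_mul_sin (z θ : ℝ) :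
    gegSeries (oddBessel z) 0 (Real.cos θ) * Real.sin θ
      = z * Real.cos θ * Real.sin (z * Real.sin θ) := by
  have shifted := (hasSum_nat_add_iff' 1).2 (hasSum_natCast_mul_besselJ_mul_sin z θ)
  simp only [Finset.range_one, Finset.sum_singleton, Nat.cast_zero, zero_mul, sub_zero] at shifted
  simp only [← shifted.tsum_eq, gegSeries, pow_zero, Nat.factorial_zero, Nat.cast_one, one_mul,
    Nat.cast_zero, zero_add, add_zero, ← tsum_mul_right]
  refine tsum_congr fun k => ?_
  rw [mul_assoc, geg_one_cos_mul_sin, oddBessel, pow_succ]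
  push_cast
  ring

theorem sin_mul_sin_eq_besselJtSqrt (z θ : ℝ) :
    Real.sin (z * Real.sin θ)
      = z * √(Real.pi / 2) * besselJtSqrt (1 / 2) z (z * Real.cos θ) * Real.sin θ := by
  rw [← mul_sqrt_pi_div_two_mul_besselJt_half,
    besselJtSqrt_eq_besselJt (t := z * Real.sin θ) _ (by rw [mul_pow, mul_pow, Real.sin_sq]; ring)]
  ring

theorem hasDerivAt_mul_pow_mul_comp {H : ℕ → ℝ → ℝ}
    (hH : ∀ N s, HasDerivAt (H N) (H (N + 1) s) s) (c z : ℝ) (N : ℕ) (w : ℝ) :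
    HasDerivAt (fun w => c * z ^ N * H N (z * w)) (c * z ^ (N + 1) * H (N + 1) (z * w)) w := by
  have inner_deriv : HasDerivAt (fun w => z * w) z w := by
    simpa using (hasDerivAt_id w).const_mul z
  refine (((hH N (z * w)).comp w inner_deriv).const_mul (c * z ^ N)).congr_deriv ?_
  rw [pow_succ]
  ring

theorem exists_cos_eq_and_sin_ne_zero {w : ℝ} (hw : w ∈ Set.Ioo (-1 : ℝ) 1) :
    ∃ θ, Real.cos θ = w ∧ Real.sin θ ≠ 0 := by
  refine ⟨Real.arccos w, Real.cos_arccos hw.1.le hw.2.le, ?_⟩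
  rw [Real.sin_arccos]
  exact (Real.sqrt_pos.2 (by nlinarith [hw.1, hw.2])).ne'

theorem gegSeries_evenBessel (z : ℝ) (N : ℕ) {w : ℝ} (hw : w ∈ Set.Icc (-1 : ℝ) 1) :
    gegSeries (evenBessel z) N w
      = z * √(Real.pi / 2) * z ^ N * besselHermiteSum (1 / 2) z N (z * w) := by
  rw [← closure_Ioo (by norm_num)] at hw
  refine eqOn_closure_of_hasDerivAt_succ isOpen_Ioo
    (hasDerivAt_gegSeries (isEntireCoeff_evenBessel z))
    (hasDerivAt_mul_pow_mul_comp (hasDerivAt_besselHermiteSum (1 / 2) z) (z * √(Real.pi / 2)) z)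
    (fun v hv => ?_) N hw
  obtain ⟨θ, rfl, sin_ne_zero⟩ := exists_cos_eq_and_sin_ne_zero hv
  apply mul_right_cancel₀ sin_ne_zero
  beta_reduce
  rw [gegSeries_evenBessel_zero_mul_sin, sin_mul_sin_eq_besselJtSqrt, besselHermiteSum,
    hermiteSum_zero, pow_zero, mul_one, Nat.cast_zero, add_zero]

theorem gegSeries_oddBessel (z : ℝ) (N : ℕ) {w : ℝ} (hw : w ∈ Set.Icc (-1 : ℝ) 1) :
    gegSeries (oddBessel z) N w
      = z * √(Real.pi / 2) * z ^ N * besselHermiteSum (-1 / 2) z (N + 1) (z * w) := by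
  rw [← closure_Ioo (by norm_num)] at hw
  refine eqOn_closure_of_hasDerivAt_succ isOpen_Ioo
    (hasDerivAt_gegSeries (isEntireCoeff_oddBessel z))
    (hasDerivAt_mul_pow_mul_comp (H := fun N => besselHermiteSum (-1 / 2) z (N + 1))
      (fun N => hasDerivAt_besselHermiteSum (-1 / 2) z (N + 1)) (z * √(Real.pi / 2)) z)
    (fun v hv => ?_) N hw
  obtain ⟨θ, rfl, sin_ne_zero⟩ := exists_cos_eq_and_sin_ne_zero hv
  apply mul_right_cancel₀ sin_ne_zero
  beta_reduce
  rw [gegSeries_oddBessel_zero_mul_sin, sin_mul_sin_eq_besselJtSqrt, besselHermiteSum, zero_add,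
    hermiteSum_one, Nat.cast_one, show (-1 / 2 + 1 : ℝ) = 1 / 2 by norm_num]
  ring

end KernelSeries

section KernelCoefficients

theorem neg_one_pow_add_neg_one_pow {R : Type*} [Ring R] (N k : ℕ) :
    (-1 : R) ^ N + (-1) ^ k = (-1) ^ N * (1 + (-1) ^ (k + N)) := by
  rw [mul_add, mul_one, ← pow_add, add_left_comm, pow_add, Even.neg_one_pow ⟨N, rfl⟩, mul_one]

theorem neg_one_pow_sub_neg_one_pow {R : Type*} [Ring R] (N k : ℕ) :
    (-1 : R) ^ N - (-1) ^ k = (-1) ^ N * (1 - (-1) ^ (k + N)) := by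
  rw [mul_sub, mul_one, ← pow_add, add_left_comm, pow_add, Even.neg_one_pow ⟨N, rfl⟩, mul_one]

theorem rpow_neg_natCast_add_one (z : ℝ) (N : ℕ) : z ^ (-((N : ℝ) + 1)) = (z ^ (N + 1))⁻¹ := by
  exact_mod_cast (Real.rpow_neg_natCast z (N + 1)).trans (zpow_neg_coe_of_pos z N.succ_pos)

variable (N : ℕ) (w z : ℝ)

theorem AfunU_neg_one_pow : AfunU ((-1) ^ N) (N + 1) w z
    = ((-1) ^ N * (N + 1) * (z ^ (N + 1))⁻¹ * gegSeries (evenBessel z) N w : ℝ) := by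
  have term_eq (k : ℕ) : ((-1 : ℂ) ^ N + (-1) ^ k)
        * (z ^ (-((N : ℝ) + 1)) * besselJ (k + (N + 1)) z * geg (N + 1) k w : ℝ)
      = ((-1) ^ N * (z ^ (N + 1))⁻¹ * (evenBessel z (k + N) * geg (N + 1) k w) : ℝ) := by
    rw [neg_one_pow_add_neg_one_pow, rpow_neg_natCast_add_one, evenBessel, Nat.cast_add, add_assoc]
    push_cast
    ring
  rw [AfunU, gegSeries]
  simp only [term_eq, add_sub_cancel_right, Real.rpow_natCast]
  rw [← Complex.ofReal_tsum, tsum_mul_left, ← Complex.ofReal_mul,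
    Real.Gamma_add_one (by positivity), Real.Gamma_nat_eq_factorial]
  congr 1
  ring

theorem BfunU_neg_one_pow : BfunU ((-1) ^ N) (N + 1) w z
    = (-(-1) ^ N * (z ^ (N + 1))⁻¹ * gegSeries (oddBessel z) N w : ℝ) := by
  have term_eq (k : ℕ) : ((k : ℂ) + ((N + 1 : ℝ) : ℂ)) * ((-1) ^ N - (-1) ^ k)
        * (z ^ (-((N : ℝ) + 1)) * besselJ (k + (N + 1)) z * geg (N + 1) k w : ℝ)
      = ((-1) ^ N * (z ^ (N + 1))⁻¹ * (oddBessel z (k + N) * geg (N + 1) k w) : ℝ) := by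
    rw [neg_one_pow_sub_neg_one_pow, rpow_neg_natCast_add_one, oddBessel, Nat.cast_add, add_assoc]
    push_cast
    ring
  rw [BfunU, gegSeries]
  simp only [term_eq, add_sub_cancel_right, Real.rpow_natCast]
  rw [← Complex.ofReal_tsum, tsum_mul_left, ← Complex.ofReal_neg, ← Complex.ofReal_mul,
    Real.Gamma_nat_eq_factorial]
  congr 1
  ring

theorem CfunU_neg_one_pow : CfunU ((-1) ^ N) (N + 1) w z
    = (-(-1) ^ N * (z ^ (N + 2))⁻¹ * gegSeries (evenBessel z) (N + 1) w : ℝ) := by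
  have rpow_eq : z ^ (-((N : ℝ) + 1) - 1) = (z ^ (N + 2))⁻¹ := by
    rw [← neg_add', ← Nat.cast_succ, rpow_neg_natCast_add_one]
  have term_eq (k : ℕ) : ((-1 : ℂ) ^ N + (-1) ^ (k + 1)) * (z ^ (-((N : ℝ) + 1) - 1)
        * besselJ ((k + 1 : ℕ) + (N + 1)) z * deriv (geg (N + 1) (k + 1)) w : ℝ)
      = ((-1) ^ N * (z ^ (N + 2))⁻¹ * (2 * (N + 1))
        * (evenBessel z (k + (N + 1)) * geg ((N + 1 : ℕ) + 1) k w) : ℝ) := by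
    rw [neg_one_pow_add_neg_one_pow, (hasDerivAt_geg_succ _ w k).deriv, rpow_eq, evenBessel,
      show k + 1 + N = k + (N + 1) by ring,
      show ((k + 1 : ℕ) : ℝ) + (N + 1) = (k + (N + 1) : ℕ) + 1 by push_cast; ring]
    push_cast
    ring
  rw [CfunU, gegSeries, ← Nat.succ_injective.tsum_eq]
  · simp only [Nat.succ_eq_add_one, term_eq, add_sub_cancel_right, Real.rpow_natCast]
    rw [← Complex.ofReal_tsum, tsum_mul_left, ← Complex.ofReal_neg, ← Complex.ofReal_mul,
      Real.Gamma_nat_eq_factorial, Nat.factorial_succ]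
    congr 1
    push_cast
    ring
  · rintro (_ | k) hk
    · simp [(hasDerivAt_geg_zero _ w).deriv] at hk
    · exact ⟨k, rfl⟩

variable {w z}

theorem AfunU_eq_besselHermiteSum (hz : z ≠ 0) (hw : w ∈ Set.Icc (-1 : ℝ) 1) :
    AfunU ((-1) ^ N) (N + 1) w z
      = ((-1) ^ N * √(Real.pi / 2) * ((N + 1) * besselHermiteSum (1 / 2) z N (z * w)) : ℝ) := by
  rw [AfunU_neg_one_pow, gegSeries_evenBessel z N hw]
  congr 1
  field_simp
  ring

theorem BfunU_eq_besselHermiteSum (hz : z ≠ 0) (hw : w ∈ Set.Icc (-1 : ℝ) 1) :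
    BfunU ((-1) ^ N) (N + 1) w z
      = ((-1) ^ N * √(Real.pi / 2) * -besselHermiteSum (-1 / 2) z (N + 1) (z * w) : ℝ) := by
  rw [BfunU_neg_one_pow, gegSeries_oddBessel z N hw]
  congr 1
  field_simp
  ring

theorem CfunU_eq_besselHermiteSum (hz : z ≠ 0) (hw : w ∈ Set.Icc (-1 : ℝ) 1) :
    CfunU ((-1) ^ N) (N + 1) w z
      = ((-1) ^ N * √(Real.pi / 2) * -besselHermiteSum (1 / 2) z (N + 1) (z * w) : ℝ) := by
  rw [CfunU_neg_one_pow, gegSeries_evenBessel z (N + 1) hw]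
  congr 1
  field_simp
  ring

end KernelCoefficients

section ExplicitSums

variable {z s t : ℝ}

theorem hermiteCoeff_eq_Gamma_div_Gamma {n l : ℕ} (h : 2 * l ≤ n) :
    hermiteCoeff n l
      = 1 / (2 ^ l * l.factorial) * (Real.Gamma (n + 1) / Real.Gamma (n - 2 * l + 1)) := by
  have gamma_sub : Real.Gamma (n - 2 * l + 1) = (n - 2 * l).factorial := by
    rw [← Real.Gamma_nat_eq_factorial]
    push_cast [h]
    rfl
  rw [gamma_sub, Real.Gamma_nat_eq_factorial, ← Nat.factorial_mul_descFactorial h, hermiteCoeff]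
  push_cast
  field_simp

theorem besselHermiteSum_eq_sum_besselJt (a : ℝ) (n : ℕ) (h : t ^ 2 = z ^ 2 - s ^ 2) :
    besselHermiteSum a z n s = ∑ l ∈ Finset.range (n / 2 + 1),
      s ^ (n - 2 * l) * (1 / (2 ^ l * l.factorial))
        * (Real.Gamma (n + 1) / Real.Gamma (n - 2 * l + 1)) * besselJt (a + n - l) t := by
  rw [besselHermiteSum, hermiteSum_eq_sum_range_half]
  refine Finset.sum_congr rfl fun l hl => ?_
  have two_mul_le : 2 * l ≤ n := by rw [Finset.mem_range] at hl; omega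
  rw [hermiteCoeff_eq_Gamma_div_Gamma two_mul_le, besselJtSqrt_eq_besselJt _ h,
    Nat.cast_sub (by omega), add_sub_assoc]
  ring

theorem Astar_eq_besselHermiteSum (N : ℕ) (h : t ^ 2 = z ^ 2 - s ^ 2) :
    Astar (2 * N + 4) s t = (N + 1) * besselHermiteSum (1 / 2) z N s := by
  rw [besselHermiteSum_eq_sum_besselJt _ _ h, Astar, Finset.mul_sum,
    show (2 * N + 4 - 3) / 4 = N / 2 by omega]
  refine Finset.sum_congr rfl fun l _ => ?_
  rw [show (2 * N + 4) / 2 - 2 - 2 * l = N - 2 * l by omega,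
    show ((2 * N + 4 : ℕ) : ℝ) / 2 = N + 1 + 1 by push_cast; ring,
    show (N : ℝ) + 1 + 1 - 2 * l - 1 = N - 2 * l + 1 by ring,
    show (((2 * N + 4 : ℕ) : ℝ) - 2 * l - 3) / 2 = 1 / 2 + N - l by push_cast; ring,
    Real.Gamma_add_one (by positivity)]
  ring

theorem Bstar_eq_besselHermiteSum (N : ℕ) (h : t ^ 2 = z ^ 2 - s ^ 2) :
    Bstar (2 * N + 4) s t = -besselHermiteSum (-1 / 2) z (N + 1) s := by
  rw [besselHermiteSum_eq_sum_besselJt _ _ h, Bstar,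
    show (2 * N + 4 - 2) / 4 = (N + 1) / 2 by omega]
  refine congrArg Neg.neg (Finset.sum_congr rfl fun l _ => ?_)
  rw [show (2 * N + 4) / 2 - 1 - 2 * l = N + 1 - 2 * l by omega,
    show ((2 * N + 4 : ℕ) : ℝ) / 2 = (N + 1 : ℕ) + 1 by push_cast; ring, add_sub_right_comm,
    show (((2 * N + 4 : ℕ) : ℝ) - 2 * l - 3) / 2 = -1 / 2 + (N + 1 : ℕ) - l by push_cast; ring]

theorem Cstar_eq_besselHermiteSum (N : ℕ) (h : t ^ 2 = z ^ 2 - s ^ 2) :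
    Cstar (2 * N + 4) s t = -besselHermiteSum (1 / 2) z (N + 1) s := by
  rw [besselHermiteSum_eq_sum_besselJt _ _ h, Cstar,
    show (2 * N + 4 - 2) / 4 = (N + 1) / 2 by omega]
  refine congrArg Neg.neg (Finset.sum_congr rfl fun l _ => ?_)
  rw [show (2 * N + 4) / 2 - 1 - 2 * l = N + 1 - 2 * l by omega,
    show ((2 * N + 4 : ℕ) : ℝ) / 2 = (N + 1 : ℕ) + 1 by push_cast; ring, add_sub_right_comm,
    show (((2 * N + 4 : ℕ) : ℝ) - 2 * l - 1) / 2 = 1 / 2 + (N + 1 : ℕ) - l by push_cast; ring]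

end ExplicitSums

section Kernel

theorem ofReal_smul_Cl (r : ℝ) (a : Cl m) : (r : ℂ) • a = r • a :=
  funext fun S => (Complex.real_smul (x := r) (z := a S)).symm

theorem ip_self_nonneg (x : Fin m → ℝ) : 0 ≤ ip x x :=
  Finset.sum_nonneg fun i _ => mul_self_nonneg (x i)

theorem nrm_pos {x : Fin m → ℝ} (hx : x ≠ 0) : 0 < nrm x := by
  obtain ⟨i, hi⟩ := Function.ne_iff.1 hx
  exact Real.sqrt_pos.2
    (Finset.sum_pos' (fun j _ => mul_self_nonneg _) ⟨i, Finset.mem_univ _, mul_self_pos.2 hi⟩)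

theorem nrm_mul_nrm_sq (x y : Fin m → ℝ) : (nrm x * nrm y) ^ 2 = ip x x * ip y y := by
  rw [mul_pow, nrm, nrm, Real.sq_sqrt (ip_self_nonneg x), Real.sq_sqrt (ip_self_nonneg y)]

theorem ip_sq_le (x y : Fin m → ℝ) : ip x y ^ 2 ≤ ip x x * ip y y := by
  simpa only [ip, pow_two] using Finset.sum_mul_sq_le_sq_mul_sq Finset.univ x y

theorem ip_div_nrm_mul_nrm_mem_Icc (x y : Fin m → ℝ) :
    ip x y / (nrm x * nrm y) ∈ Set.Icc (-1 : ℝ) 1 := by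
  have nrm_nonneg : 0 ≤ nrm x * nrm y := mul_nonneg (Real.sqrt_nonneg _) (Real.sqrt_nonneg _)
  have abs_le_nrm : |ip x y| ≤ nrm x * nrm y :=
    abs_le_of_sq_le_sq (by rw [nrm_mul_nrm_sq]; exact ip_sq_le x y) nrm_nonneg
  rw [Set.mem_Icc, ← abs_le, abs_div, abs_of_nonneg nrm_nonneg]
  exact div_le_one_of_le₀ abs_le_nrm nrm_nonneg

end Kernel

/-- For even `m > 2`, the Clifford-Fourier kernel is the finite sum of Bessel functions
`K_-(x,y) = (-1)^{m/2} (π/2)^{1/2} ( A*_{(m-2)/2}(s,t) + B*_{(m-2)/2}(s,t)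
+ (x∧y) C*_{(m-2)/2}(s,t) )`, with `s = ⟨x,y⟩` and `t = |x∧y| = √(|x|²|y|² - s²)`. -/
theorem kernel_explicit_even (m : ℕ) (hme : Even m) (hm : 2 < m)
    (x y : Fin m → ℝ) (hx : x ≠ 0) (hy : y ≠ 0)
    (s t : ℝ) (hs : s = ip x y) (ht : t = Real.sqrt (ip x x * ip y y - s^2)) :
    Kminus m x y
      = ((-1 : ℝ)^(m/2) * Real.sqrt (Real.pi/2)) •
          ((Astar m s t + Bstar m s t) • (1 : Cl m) + Cstar m s t • wedge m x y) := by
  obtain ⟨N, rfl⟩ : ∃ N, m = 2 * N + 4 := by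
    obtain ⟨r, rfl⟩ := hme
    exact ⟨r - 2, by omega⟩
  subst hs
  have z_ne_zero : nrm x * nrm y ≠ 0 := (mul_pos (nrm_pos hx) (nrm_pos hy)).ne'
  have t_sq : t ^ 2 = (nrm x * nrm y) ^ 2 - ip x y ^ 2 := by
    rw [ht, Real.sq_sqrt (sub_nonneg.2 (ip_sq_le x y)), nrm_mul_nrm_sq]
  have w_mem := ip_div_nrm_mul_nrm_mem_Icc x y
  have lam_eq : (((2 * N + 4 : ℕ) : ℝ) - 2) / 2 = N + 1 := by push_cast; ring
  have I_pow : Complex.I ^ (2 * N + 4) = (-1) ^ N := by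
    rw [pow_add, pow_mul, Complex.I_sq, Complex.I_pow_four, mul_one]
  have sign_eq : (-1 : ℝ) ^ ((2 * N + 4) / 2) = (-1) ^ N := by
    rw [show (2 * N + 4) / 2 = N + 2 by omega, pow_add, neg_one_sq, mul_one]
  rw [Kminus, lam_eq, I_pow, AfunU_eq_besselHermiteSum N z_ne_zero w_mem,
    BfunU_eq_besselHermiteSum N z_ne_zero w_mem, CfunU_eq_besselHermiteSum N z_ne_zero w_mem,
    mul_div_cancel₀ _ z_ne_zero, ← Astar_eq_besselHermiteSum N t_sq,
    ← Bstar_eq_besselHermiteSum N t_sq, ← Cstar_eq_besselHermiteSum N t_sq,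
    ← Complex.ofReal_add, ← mul_add, ofReal_smul_Cl, ofReal_smul_Cl, mul_smul,
    mul_smul _ (Cstar _ _ _), ← smul_add, sign_eq]

end CliffordFourier
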